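/- For a strongly Gorenstein (L,A)-projective module G, an R-module M is Gorenstein (L,A)-projective if it lies in ^⊥(G^⊥) = {X : Ext¹_R(X, N) = 0 for all N with Ext¹_R(G, N) = 0}. -/

import Mathlib

/-!
Let `G` be the kernel of `f : P ⟶ P`, so that there is an exact sequence
`0 → G → P → G → 0` with inclusion `j` and `P` projective. Then `Ext¹(G, N) = 0` says exactly that
every `G ⟶ N` extends along `j` (`ExtendsAlong j N`), and this holds for all `N ∈ 𝓛` because the
periodic complex of `f` is `Hom(-, 𝓛)`-exact. A module lies in `𝓦 = ^⊥(G^⊥)` iff it lifts along every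
epimorphism with kernel in `G^⊥` (`LiftsFrom j`).

Since `G` is its own first syzygy, `G^⊥` is closed under kernels of epimorphisms and under cokernels
of embeddings into injectives. Two closure properties of `𝓦` follow.

* `𝓦` is closed under first syzygies (`LiftsFrom.syzygy`).
* Every `X ∈ 𝓦` embeds into a projective module with cokernel in `𝓦`
  (`LiftsFrom.exists_cosyzygy`). The small object argument for `j` gives `X ⟶ Q ⟶ 0` with
  `Q ∈ G^⊥` and `X ⟶ Q` lifting against all epimorphisms with kernel in `G^⊥`. This lifting
  property yields that the cokernel lies in `𝓦`, and, applied to a projective presentation of `Q`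
  whose kernel is again in `G^⊥`, that `Q` is projective.

Splicing these sequences in both directions starting from `M ∈ 𝓦` gives a doubly infinite exact
sequence of projectives all of whose syzygies lie in `𝓦`. It is `Hom(-, 𝓛)`-exact because
`𝓛 ⊆ G^⊥`.
-/

open CategoryTheory CategoryTheory.Limits DirectSum

namespace DualityPaper

variable {R : Type} [Ring R]

/-- The right `R`-module structure on the group of additive maps out of a left `R`-module,
given by `(f • r) m = f (r • m)`. -/
instance charModuleRight (M A : Type) [AddCommGroup M] [AddCommGroup A] [Module R M] :
    Module Rᵐᵒᵖ (M →+ A) where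
  smul r f := f.comp (DistribMulAction.toAddMonoidHom M r.unop)
  one_smul f := AddMonoidHom.ext fun m => by
    show f ((1 : Rᵐᵒᵖ).unop • m) = f m
    simp
  mul_smul r s f := AddMonoidHom.ext fun m => by
    show f ((r * s).unop • m) = f (s.unop • r.unop • m)
    rw [MulOpposite.unop_mul, mul_smul]
  smul_zero r := rfl
  smul_add r f g := rfl
  add_smul r s f := AddMonoidHom.ext fun m => by
    show f ((r + s).unop • m) = f (r.unop • m) + f (s.unop • m)
    rw [MulOpposite.unop_add, add_smul, map_add]
  zero_smul f := AddMonoidHom.ext fun m => by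
    show f ((0 : Rᵐᵒᵖ).unop • m) = 0
    simp

/-- The left `R`-module structure on the group of additive maps out of a right `R`-module. -/
instance charModuleLeft (N A : Type) [AddCommGroup N] [AddCommGroup A] [Module Rᵐᵒᵖ N] :
    Module R (N →+ A) where
  smul r f := f.comp (DistribMulAction.toAddMonoidHom N (MulOpposite.op r))
  one_smul f := AddMonoidHom.ext fun m => by
    show f ((MulOpposite.op (1 : R)) • m) = f m
    simp
  mul_smul r s f := AddMonoidHom.ext fun m => by
    show f (MulOpposite.op (r * s) • m) = f (MulOpposite.op s • MulOpposite.op r • m)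
    rw [MulOpposite.op_mul, mul_smul]
  smul_zero r := rfl
  smul_add r f g := rfl
  add_smul r s f := AddMonoidHom.ext fun m => by
    show f (MulOpposite.op (r + s) • m) = f (MulOpposite.op r • m) + f (MulOpposite.op s • m)
    rw [MulOpposite.op_add, add_smul, map_add]
  zero_smul f := AddMonoidHom.ext fun m => by
    show f (MulOpposite.op (0 : R) • m) = 0
    simp

/-- The character module `M⁺ = Hom_ℤ(M, ℚ/ℤ)` of a left module, as a right module. -/
def charL (M : ModuleCat.{0} R) : ModuleCat.{0} Rᵐᵒᵖ :=
  ModuleCat.of Rᵐᵒᵖ (M →+ AddCircle (1 : ℚ))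

/-- The character module `N⁺ = Hom_ℤ(N, ℚ/ℤ)` of a right module, as a left module. -/
def charR (N : ModuleCat.{0} Rᵐᵒᵖ) : ModuleCat.{0} R :=
  ModuleCat.of R (N →+ AddCircle (1 : ℚ))

/-- A left module over a (possibly noncommutative) ring is flat iff its character module is an
injective right module (Lambek); we take this as the definition of flatness. -/
def IsFlatMod (M : ModuleCat.{0} R) : Prop := CategoryTheory.Injective (charL M)

/-- `f`, `g` form a short exact sequence `0 → A → B → C → 0`. -/
def SES {A B C : ModuleCat.{0} R} (f : A ⟶ B) (g : B ⟶ C) : Prop :=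
  ∃ w : f ≫ g = 0, (ShortComplex.mk f g w).ShortExact

/-- Vanishing of `Ext^n_R(M, N)`. -/
def ExtVanish (n : ℕ) (M N : ModuleCat.{0} R) : Prop :=
  Subsingleton (((_root_.Ext ℤ (ModuleCat.{0} R) n).obj (Opposite.op M)).obj N)

/-- A complete duality pair `(𝓛, 𝓐)` over `R`. -/
structure CompleteDualityPair (𝓛 : Set (ModuleCat.{0} R)) (𝓐 : Set (ModuleCat.{0} Rᵐᵒᵖ)) :
    Prop where
  isoClosed_L : ∀ {M N : ModuleCat.{0} R}, (M ≅ N) → M ∈ 𝓛 → N ∈ 𝓛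
  isoClosed_A : ∀ {M N : ModuleCat.{0} Rᵐᵒᵖ}, (M ≅ N) → M ∈ 𝓐 → N ∈ 𝓐
  char_mem_iff : ∀ M : ModuleCat.{0} R, M ∈ 𝓛 ↔ charL M ∈ 𝓐
  char_mem_iff' : ∀ N : ModuleCat.{0} Rᵐᵒᵖ, N ∈ 𝓐 ↔ charR N ∈ 𝓛
  summands_A : ∀ A ∈ 𝓐, ∀ (B : ModuleCat.{0} Rᵐᵒᵖ) (i : B ⟶ A) (p : A ⟶ B),
    i ≫ p = 𝟙 B → B ∈ 𝓐
  sums_A : ∀ A B : ModuleCat.{0} Rᵐᵒᵖ, A ∈ 𝓐 → B ∈ 𝓐 → ModuleCat.of Rᵐᵒᵖ (A × B) ∈ 𝓐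
  summands_L : ∀ L ∈ 𝓛, ∀ (K : ModuleCat.{0} R) (i : K ⟶ L) (p : L ⟶ K),
    i ≫ p = 𝟙 K → K ∈ 𝓛
  sums_L : ∀ L K : ModuleCat.{0} R, L ∈ 𝓛 → K ∈ 𝓛 → ModuleCat.of R (L × K) ∈ 𝓛
  self_mem : ModuleCat.of R R ∈ 𝓛
  coprod_L : ∀ (ι : Type) (f : ι → ModuleCat.{0} R), (∀ i, f i ∈ 𝓛) →
    ModuleCat.of R (⨁ i, f i) ∈ 𝓛
  ext_L : ∀ {A B C : ModuleCat.{0} R} (f : A ⟶ B) (g : B ⟶ C),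
    SES f g → A ∈ 𝓛 → C ∈ 𝓛 → B ∈ 𝓛

/-- A doubly infinite exact sequence of projectives which stays exact after applying
`Hom_R(-, T)` for every `T` in the class `𝓣`. -/
structure IsTotallyAcyclicWrt (𝓣 : Set (ModuleCat.{0} R))
    (C : ChainComplex (ModuleCat.{0} R) ℤ) : Prop where
  projective : ∀ n, Projective (C.X n)
  exact : ∀ n, (C.sc n).Exact
  homExact : ∀ T ∈ 𝓣, ∀ (n : ℤ) (g : C.X n ⟶ T), C.d (n + 1) n ≫ g = 0 →
    ∃ h : C.X (n - 1) ⟶ T, C.d n (n - 1) ≫ h = g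

/-- `M` is Gorenstein projective relative to the class `𝓣`:  it is a kernel in a
`Hom_R(-, 𝓣)`-exact exact sequence of projective modules. -/
def IsGProj (𝓣 : Set (ModuleCat.{0} R)) (M : ModuleCat.{0} R) : Prop :=
  ∃ C : ChainComplex (ModuleCat.{0} R) ℤ, IsTotallyAcyclicWrt 𝓣 C ∧
    ∃ n : ℤ, Nonempty (M ≅ kernel (C.d n (n - 1)))

/-- `M` is strongly Gorenstein `(𝓛,𝓐)`-projective. -/
def IsSGProj (𝓣 : Set (ModuleCat.{0} R)) (M : ModuleCat.{0} R) : Prop :=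
  ∃ (P : ModuleCat.{0} R) (f : P ⟶ P), Projective P ∧
    (∃ w : f ≫ f = 0, (ShortComplex.mk f f w).Exact) ∧
    (∀ T ∈ 𝓣, ∀ g : P ⟶ T, f ≫ g = 0 → ∃ h : P ⟶ T, f ≫ h = g) ∧
    Nonempty (M ≅ kernel f)

/-- Resolution dimension of `M` with respect to a class `𝓒` is at most `n`. -/
def ResDimLE (𝓒 : Set (ModuleCat.{0} R)) : ℕ → ModuleCat.{0} R → Prop
  | 0, M => M ∈ 𝓒
  | n + 1, M => ∃ (K C : ModuleCat.{0} R) (f : K ⟶ C) (g : C ⟶ M),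
      C ∈ 𝓒 ∧ SES f g ∧ ResDimLE 𝓒 n K

/-- `K` is an `n`-th kernel of an exact sequence `0 → K → C_{n-1} → ⋯ → C₀ → M → 0`
with all `Cᵢ` in `𝓒`. -/
def IsNthSyzygy (𝓒 : Set (ModuleCat.{0} R)) : ℕ → ModuleCat.{0} R → ModuleCat.{0} R → Prop
  | 0, M, K => Nonempty (K ≅ M)
  | n + 1, M, K => ∃ (S C : ModuleCat.{0} R) (f : S ⟶ C) (g : C ⟶ M),
      C ∈ 𝓒 ∧ SES f g ∧ IsNthSyzygy 𝓒 n S K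

/-- A left Frobenius pair `(𝓧, ω)`. -/
structure LeftFrobeniusPair (𝓧 ω : Set (ModuleCat.{0} R)) : Prop where
  summands_X : ∀ X ∈ 𝓧, ∀ (Y : ModuleCat.{0} R) (i : Y ⟶ X) (p : X ⟶ Y),
    i ≫ p = 𝟙 Y → Y ∈ 𝓧
  extensions_X : ∀ {A B C : ModuleCat.{0} R} (f : A ⟶ B) (g : B ⟶ C),
    SES f g → A ∈ 𝓧 → C ∈ 𝓧 → B ∈ 𝓧
  kerEpi_X : ∀ {A B C : ModuleCat.{0} R} (f : A ⟶ B) (g : B ⟶ C),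
    SES f g → B ∈ 𝓧 → C ∈ 𝓧 → A ∈ 𝓧
  subset : ω ⊆ 𝓧
  inj : ∀ X ∈ 𝓧, ∀ W ∈ ω, ∀ i : ℕ, 1 ≤ i → ExtVanish i X W
  cogen : ∀ X ∈ 𝓧, ∃ (W X' : ModuleCat.{0} R) (f : X ⟶ W) (g : W ⟶ X'),
    W ∈ ω ∧ X' ∈ 𝓧 ∧ SES f g
  summands_ω : ∀ W ∈ ω, ∀ (V : ModuleCat.{0} R) (i : V ⟶ W) (p : W ⟶ V),
    i ≫ p = 𝟙 V → V ∈ ω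

section Helpers

/-! ### Short exact sequences and first extension groups -/

lemma SES.mono {A B C : ModuleCat.{0} R} {f : A ⟶ B} {g : B ⟶ C} (h : SES f g) : Mono f :=
  h.2.mono_f

lemma SES.epi {A B C : ModuleCat.{0} R} {f : A ⟶ B} {g : B ⟶ C} (h : SES f g) : Epi g :=
  h.2.epi_g

lemma SES.lift {A B C : ModuleCat.{0} R} {f : A ⟶ B} {g : B ⟶ C} (h : SES f g)
    {X : ModuleCat.{0} R} (x : X ⟶ B) (hx : x ≫ g = 0) : ∃ y : X ⟶ A, y ≫ f = x :=
  ⟨h.2.fIsKernel.lift (KernelFork.ofι x hx), h.2.fIsKernel.fac _ WalkingParallelPair.zero⟩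

lemma SES.desc {A B C : ModuleCat.{0} R} {f : A ⟶ B} {g : B ⟶ C} (h : SES f g)
    {X : ModuleCat.{0} R} (x : B ⟶ X) (hx : f ≫ x = 0) : ∃ y : C ⟶ X, g ≫ y = x :=
  ⟨h.2.gIsCokernel.desc (CokernelCofork.ofπ x hx),
    h.2.gIsCokernel.fac _ WalkingParallelPair.one⟩

lemma ses_kernel {B C : ModuleCat.{0} R} (g : B ⟶ C) [Epi g] : SES (kernel.ι g) g :=
  ⟨kernel.condition g, { exact := ShortComplex.exact_kernel g }⟩

lemma ses_cokernel {A B : ModuleCat.{0} R} (f : A ⟶ B) [Mono f] : SES f (cokernel.π f) :=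
  ⟨cokernel.condition f, { exact := ShortComplex.exact_cokernel f }⟩

/-- Every morphism `G ⟶ N` extends along `j`. When `j` is the kernel of an epimorphism `P ⟶ G`
from a projective module, this says `Ext¹(G, N) = 0`. -/
def ExtendsAlong {G P : ModuleCat.{0} R} (j : G ⟶ P) (N : ModuleCat.{0} R) : Prop :=
  ∀ u : G ⟶ N, ∃ h : P ⟶ N, j ≫ h = u

/-- Schanuel's comparison: for projective presentations, the extension property depends only on the
presented module. -/
lemma ExtendsAlong.transfer {K F X K' F' N : ModuleCat.{0} R} {k : K ⟶ F} {e : F ⟶ X}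
    {k' : K' ⟶ F'} {e' : F' ⟶ X} (h : SES k e) (h' : SES k' e') [Projective F] [Projective F']
    (hN : ExtendsAlong k' N) : ExtendsAlong k N := by
  intro u
  have := h.epi
  have := h'.epi
  have := h.mono
  have := h'.mono
  let b : F' ⟶ F := Projective.factorThru e' e
  have hb : b ≫ e = e' := Projective.factorThru_comp _ _
  let a : F ⟶ F' := Projective.factorThru e e'
  have ha : a ≫ e' = e := Projective.factorThru_comp _ _
  obtain ⟨b', hb'⟩ := h.lift (k' ≫ b) (by rw [Category.assoc, hb, h'.1])
  obtain ⟨a', ha'⟩ := h'.lift (k ≫ a) (by rw [Category.assoc, ha, h.1])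
  obtain ⟨t, ht⟩ := hN (b' ≫ u)
  obtain ⟨r, hr⟩ := h.lift (𝟙 F - a ≫ b) (by simp [ha, hb])
  have hkr : k ≫ r = 𝟙 K - a' ≫ b' := by
    rw [← cancel_mono k]
    simp only [Category.assoc, hr, Preadditive.comp_sub, Preadditive.sub_comp, Category.comp_id,
      Category.id_comp, hb', reassoc_of% ha']
  refine ⟨r ≫ u + a ≫ t, ?_⟩
  rw [Preadditive.comp_add, reassoc_of% hkr, ← reassoc_of% ha', ht]
  simp

/-- `Ext¹(X, N)` is the cokernel of `Hom(F, N) ⟶ Hom(K, N)` for any projective presentation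
`0 → K → F → X → 0`. -/
lemma extVanish_one_iff {K F X N : ModuleCat.{0} R} {k : K ⟶ F} {e : F ⟶ X}
    (h : SES k e) [Projective F] : ExtVanish 1 X N ↔ ExtendsAlong k N := by
  let P := projectiveResolution X
  have key : ExtVanish 1 X N ↔ ∀ g : P.complex.X 1 ⟶ N, P.complex.d 2 1 ≫ g = 0 →
      ∃ h : P.complex.X 0 ⟶ N, P.complex.d 1 0 ≫ h = g := by
    unfold ExtVanish
    rw [← ModuleCat.isZero_iff_subsingleton, (P.isoExt (R := ℤ) 1 N).isZero_iff,
      ← HomologicalComplex.exactAt_iff_isZero_homology,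
      HomologicalComplex.exactAt_iff' _ 0 1 2 (by simp) (by simp),
      ShortComplex.moduleCat_exact_iff]
    rfl
  let p : P.complex.X 0 ⟶ X := P.π.f 0
  have hp : Epi p := inferInstanceAs (Epi (P.π.f 0))
  have hdp : P.complex.d 1 0 ≫ p = 0 := P.complex_d_comp_π_f_zero
  let c : P.complex.X 1 ⟶ kernel p := kernel.lift p (P.complex.d 1 0) hdp
  have hc : c ≫ kernel.ι p = P.complex.d 1 0 := kernel.lift_ι _ _ _
  have hcepi : Epi c :=
    (ShortComplex.exact_iff_epi_kernel_lift (ShortComplex.mk _ p hdp)).1 P.exact₀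
  have hdc : P.complex.d 2 1 ≫ c = 0 := by
    rw [← cancel_mono (kernel.ι p), Category.assoc, hc]
    simp
  have hex : (ShortComplex.mk _ c hdc).Exact := by
    let φ : ShortComplex.mk _ c hdc ⟶
        ShortComplex.mk (P.complex.d 2 1) (P.complex.d 1 0) (P.complex.d_comp_d 2 1 0) :=
      { τ₁ := 𝟙 _, τ₂ := 𝟙 _, τ₃ := kernel.ι p }
    have : Epi φ.τ₁ := inferInstanceAs (Epi (𝟙 _))
    have : IsIso φ.τ₂ := inferInstanceAs (IsIso (𝟙 _))
    have : Mono φ.τ₃ := inferInstanceAs (Mono (kernel.ι p))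
    exact (ShortComplex.exact_iff_of_epi_of_isIso_of_mono φ).2 (P.exact_succ 0)
  -- a cocycle `P₁ ⟶ N` is the same as a morphism `kernel p ⟶ N`
  rw [key]
  constructor
  · intro H
    refine ExtendsAlong.transfer h (ses_kernel p) fun u => ?_
    obtain ⟨t, ht⟩ := H (c ≫ u) (by rw [reassoc_of% hdc, zero_comp])
    refine ⟨t, ?_⟩
    rw [← cancel_epi c, reassoc_of% hc, ht]
  · intro H g hg
    have H' : ExtendsAlong (kernel.ι p) N := ExtendsAlong.transfer (ses_kernel p) h H
    obtain ⟨t, ht⟩ := H' (hex.desc g hg)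
    refine ⟨t, ?_⟩
    rw [← hc, Category.assoc, ht]
    exact hex.g_desc g hg

/-! ### The classes `G^⊥` and `^⊥(G^⊥)` -/

variable {G P : ModuleCat.{0} R} (j : G ⟶ P)

/-- `X` lifts along every epimorphism whose kernel `N` satisfies `ExtendsAlong j N`. When `j` is
the kernel of an epimorphism `P ⟶ G` from a projective module, this is the class `^⊥(G^⊥)`. -/
def LiftsFrom (X : ModuleCat.{0} R) : Prop :=
  ∀ ⦃N E Y : ModuleCat.{0} R⦄ (n : N ⟶ E) (p : E ⟶ Y), SES n p → ExtendsAlong j N →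
    ∀ g : X ⟶ Y, ∃ g' : X ⟶ E, g' ≫ p = g

variable {j}

lemma LiftsFrom.of_extendsAlong {K F X : ModuleCat.{0} R} {k : K ⟶ F} {e : F ⟶ X}
    (h : SES k e) [Projective F] (H : ∀ N, ExtendsAlong j N → ExtendsAlong k N) :
    LiftsFrom j X := by
  intro N E Y n p hnp hN g
  have := hnp.epi
  have := h.epi
  let a : F ⟶ E := Projective.factorThru (e ≫ g) p
  have ha : a ≫ p = e ≫ g := Projective.factorThru_comp _ _
  obtain ⟨u, hu⟩ := hnp.lift (k ≫ a) (by rw [Category.assoc, ha, reassoc_of% h.1, zero_comp])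
  obtain ⟨t, ht⟩ := H N hN u
  obtain ⟨g', hg'⟩ := h.desc (a - t ≫ n) (by
    rw [Preadditive.comp_sub, reassoc_of% ht, hu, sub_self])
  refine ⟨g', ?_⟩
  rw [← cancel_epi e, reassoc_of% hg', Preadditive.sub_comp, ha, Category.assoc, hnp.1]
  simp

/-- The lifting is applied to `I ⟶ I / N`, for an embedding of `N` into an injective `I`. -/
lemma LiftsFrom.extendsAlong {K F X : ModuleCat.{0} R} {k : K ⟶ F} {e : F ⟶ X}
    (h : SES k e) (hX : LiftsFrom j X) {N : ModuleCat.{0} R} (hN : ExtendsAlong j N) :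
    ExtendsAlong k N := by
  intro u
  have := h.mono
  have hs := ses_cokernel (Injective.ι N)
  let z : F ⟶ Injective.under N := Injective.factorThru (u ≫ Injective.ι N) k
  have hz : k ≫ z = u ≫ Injective.ι N := Injective.comp_factorThru _ _
  obtain ⟨y, hy⟩ := h.desc (z ≫ cokernel.π (Injective.ι N)) (by
    rw [reassoc_of% hz, hs.1, comp_zero])
  obtain ⟨w, hw⟩ := hX _ _ hs hN y
  obtain ⟨t, ht⟩ := hs.lift (z - e ≫ w) (by
    rw [Preadditive.sub_comp, Category.assoc, hw, hy, sub_self])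
  refine ⟨t, ?_⟩
  rw [← cancel_mono (Injective.ι N), Category.assoc, ht, Preadditive.comp_sub, hz,
    reassoc_of% h.1, zero_comp, sub_zero]

/-- `G^⊥` is closed under cokernels of monomorphisms into injectives: since `G` is its own first
syzygy, `Ext¹(G, N'') = Ext²(G, N) = Ext¹(G, N)`. -/
lemma ExtendsAlong.cosyzygy {q : P ⟶ G} (hjq : SES j q) [Projective P]
    {N I N' : ModuleCat.{0} R} {i : N ⟶ I} {π : I ⟶ N'} (hi : SES i π) [Injective I]
    (hN : ExtendsAlong j N) : ExtendsAlong j N' := by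
  intro u
  have := hjq.mono
  have := hjq.epi
  have := hi.epi
  let v : P ⟶ I := Projective.factorThru (q ≫ u) π
  have hv : v ≫ π = q ≫ u := Projective.factorThru_comp _ _
  obtain ⟨w, hw⟩ := hi.lift (j ≫ v) (by
    rw [Category.assoc, hv, reassoc_of% hjq.1, zero_comp])
  obtain ⟨t, ht⟩ := hN w
  obtain ⟨x, hx⟩ := hjq.desc (v - t ≫ i) (by
    rw [Preadditive.comp_sub, reassoc_of% ht, hw, sub_self])
  have hxu : x ≫ π = u := by
    rw [← cancel_epi q, reassoc_of% hx, Preadditive.sub_comp, hv, Category.assoc, hi.1]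
    simp
  refine ⟨Injective.factorThru x j ≫ π, ?_⟩
  rw [← Category.assoc, Injective.comp_factorThru, hxu]

/-- `G^⊥` is closed under kernels of epimorphisms: since `G` is its own first syzygy,
`Ext¹(G, N') = Ext²(G, N')`, which vanishes by the long exact sequence. -/
lemma ExtendsAlong.syzygy {q : P ⟶ G} (hjq : SES j q) [Projective P]
    {N' F N : ModuleCat.{0} R} {i : N' ⟶ F} {p : F ⟶ N} (hi : SES i p)
    (hF : ExtendsAlong j F) (hN : ExtendsAlong j N) : ExtendsAlong j N' := by
  intro u
  have := hi.mono
  have := hi.epi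
  obtain ⟨c, hc⟩ := hF (u ≫ i)
  obtain ⟨d, hd⟩ := hjq.desc (c ≫ p) (by rw [reassoc_of% hc, hi.1, comp_zero])
  obtain ⟨m, hm⟩ := hN d
  let m' : P ⟶ F := Projective.factorThru m p
  have hm' : m' ≫ p = m := Projective.factorThru_comp _ _
  obtain ⟨t, ht⟩ := hi.lift (c - q ≫ j ≫ m') (by
    rw [Preadditive.sub_comp, Category.assoc, Category.assoc, hm', hm, hd, sub_self])
  refine ⟨t, ?_⟩
  rw [← cancel_mono i, Category.assoc, ht, Preadditive.comp_sub, hc, reassoc_of% hjq.1,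
    zero_comp, sub_zero]

/-- `^⊥(G^⊥)` is closed under syzygies: `Ext¹(K, N) = Ext²(X, N) = Ext¹(X, I / N)` for an
embedding of `N` into an injective `I`, and `I / N` is again in `G^⊥`. -/
lemma LiftsFrom.syzygy {q : P ⟶ G} (hjq : SES j q) [Projective P]
    {K F X : ModuleCat.{0} R} {k : K ⟶ F} {e : F ⟶ X} (h : SES k e) [Projective F]
    (hX : LiftsFrom j X) : LiftsFrom j K := by
  have hK := ses_kernel (Projective.π K)
  refine LiftsFrom.of_extendsAlong hK fun N hN y => ?_
  have hs := ses_cokernel (Injective.ι N)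
  have := hs.epi
  let y' : Projective.over K ⟶ Injective.under N :=
    Injective.factorThru (y ≫ Injective.ι N) (kernel.ι (Projective.π K))
  have hy' : kernel.ι (Projective.π K) ≫ y' = y ≫ Injective.ι N :=
    Injective.comp_factorThru _ _
  obtain ⟨g, hg⟩ := hK.desc (y' ≫ cokernel.π (Injective.ι N)) (by
    rw [reassoc_of% hy', hs.1, comp_zero])
  obtain ⟨z, hz⟩ := hX.extendsAlong h (hN.cosyzygy hjq hs) g
  let z' : F ⟶ Injective.under N := Projective.factorThru z (cokernel.π (Injective.ι N))
  have hz' : z' ≫ cokernel.π (Injective.ι N) = z := Projective.factorThru_comp _ _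
  obtain ⟨t, ht⟩ := hs.lift (y' - Projective.π K ≫ k ≫ z') (by
    rw [Preadditive.sub_comp, Category.assoc, Category.assoc, hz', hz, hg, sub_self])
  refine ⟨t, ?_⟩
  rw [← cancel_mono (Injective.ι N), Category.assoc, ht, Preadditive.comp_sub, hy',
    reassoc_of% hK.1, zero_comp, sub_zero]

/-! ### Completeness through the small object argument -/

open MorphismProperty in
/-- The relative cell complexes of a monomorphism are diagrams of monomorphisms, and `Hom(G, -)`
commutes with sufficiently filtered colimits of those. -/
lemma hasSmallObjectArgument_of_mono [Mono j] :
    HasSmallObjectArgument.{0} (ofHoms (fun _ : Unit => j)) := by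
  obtain ⟨κ, hκ', hκ⟩ := HasCardinalLT.exists_regular_cardinal.{0} (Subobject G)
  have : Fact κ.IsRegular := ⟨hκ'⟩
  have : Nonempty κ.ord.ToType := by simpa using hκ'.ne_zero
  have := WellFoundedLT.toOrderBot κ.ord.ToType
  have hle : ofHoms (fun _ : Unit => j) ≤ monomorphisms (ModuleCat.{0} R) := by
    rintro _ _ _ ⟨_⟩
    exact monomorphisms.infer_property j
  exact ⟨κ, inferInstance, inferInstance,
    { preservesColimit {A B X Y} i hi f hf := by
        let hf' : (monomorphisms (ModuleCat.{0} R)).TransfiniteCompositionOfShape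
            κ.ord.ToType f :=
          { toTransfiniteCompositionOfShape := hf.toTransfiniteCompositionOfShape
            map_mem j hj := by
              have := (hf.attachCells j hj).pushouts_coproducts
              simp only [ofHoms_homFamily] at this
              refine (?_ : _ ≤ monomorphisms _) _ this
              simp only [pushouts_le_iff, coproducts_le_iff]
              exact hle }
        have (j j' : κ.ord.ToType) (φ : j ⟶ j') : Mono (hf'.F.map φ) := hf'.mem_map φ
        apply IsGrothendieckAbelian.preservesColimit_coyoneda_obj_of_mono (Y := hf'.F) (κ := κ)
        obtain ⟨⟨⟩⟩ := hi
        exact hκ }⟩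

/-- Epimorphisms with kernel in `G^⊥` have the right lifting property against `j`. -/
lemma rlp_of_ses [Projective P] {N E Y : ModuleCat.{0} R}
    {n : N ⟶ E} {p : E ⟶ Y} (h : SES n p) (hN : ExtendsAlong j N) :
    (MorphismProperty.ofHoms (fun _ : Unit => j)).rlp p := by
  rintro _ _ _ ⟨_⟩
  refine ⟨fun {u v} sq => ?_⟩
  have := h.epi
  let w : P ⟶ E := Projective.factorThru v p
  have hw : w ≫ p = v := Projective.factorThru_comp _ _
  obtain ⟨d, hd⟩ := h.lift (u - j ≫ w) (by
    rw [Preadditive.sub_comp, Category.assoc, hw, sq.w, sub_self])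
  obtain ⟨t, ht⟩ := hN d
  exact ⟨⟨{ l := w + t ≫ n
            fac_left := by rw [Preadditive.comp_add, reassoc_of% ht, hd]; simp
            fac_right := by rw [Preadditive.add_comp, hw, Category.assoc, h.1]; simp }⟩⟩

open scoped ZeroObject in
/-- Completeness of the cotorsion pair on `^⊥(G^⊥)`: the small object argument for `j`, applied to
`X ⟶ 0`, embeds `X` into an object `Q` of `G^⊥` with cokernel in `^⊥(G^⊥)`. The embedding lifts
against epimorphisms with kernel in `G^⊥`, and so `Q` is a retract of a projective
module mapping onto it. -/
lemma LiftsFrom.exists_cosyzygy {q : P ⟶ G} (hjq : SES j q) [Projective P]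
    (hproj : ∀ F : ModuleCat.{0} R, Projective F → ExtendsAlong j F)
    {X : ModuleCat.{0} R} (hX : LiftsFrom j X) :
    ∃ (Q X' : ModuleCat.{0} R) (k : X ⟶ Q) (e : Q ⟶ X'),
      Projective Q ∧ SES k e ∧ LiftsFrom j X' := by
  have := hjq.mono
  have := hasSmallObjectArgument_of_mono (j := j)
  let I := MorphismProperty.ofHoms (fun _ : Unit => j)
  let fac := MorphismProperty.factorizationData I.rlp.llp I.rlp (0 : X ⟶ 0)
  let k : X ⟶ fac.Z := fac.i
  have hk : ∀ ⦃N E Y : ModuleCat.{0} R⦄ (n : N ⟶ E) (p : E ⟶ Y), SES n p →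
      ExtendsAlong j N → HasLiftingProperty k p := fun N E Y n p h hN =>
    fac.hi _ (rlp_of_ses h hN)
  have hZ : ExtendsAlong j fac.Z := by
    intro u
    have : HasLiftingProperty j fac.p := fac.hp _ ⟨()⟩
    have sq : CommSq u j fac.p 0 := ⟨(isZero_zero _).eq_of_tgt _ _⟩
    exact ⟨sq.lift, sq.fac_left⟩
  have hmono : Mono k := by
    -- `X ⟶ E ⟶ 0` with `E` injective: the embedding of `X` into `E` factors through `k`
    have hid : SES (𝟙 (Injective.under X)) (0 : _ ⟶ (0 : ModuleCat.{0} R)) := by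
      exact ⟨comp_zero, ShortComplex.Splitting.shortExact
        { r := 𝟙 _, s := 0, s_g := (isZero_zero _).eq_of_src _ _, id := by simp }⟩
    have := hk _ _ hid fun u => ⟨Injective.factorThru u j, Injective.comp_factorThru _ _⟩
    have sq : CommSq (Injective.ι X) k (0 : _ ⟶ (0 : ModuleCat.{0} R)) 0 := ⟨by simp⟩
    have : Mono (k ≫ sq.lift) := by rw [sq.fac_left]; infer_instance
    exact mono_of_mono k sq.lift
  refine ⟨fac.Z, cokernel k, k, cokernel.π k, ?_, ses_cokernel k, ?_⟩
  · have hs := ses_kernel (Projective.π fac.Z)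
    have hK := ExtendsAlong.syzygy hjq hs (hproj _ inferInstance) hZ
    have := hk _ _ hs hK
    obtain ⟨f, hf⟩ := hX _ _ hs hK k
    have sq : CommSq f k (Projective.π fac.Z) (𝟙 _) := ⟨by simp [hf]⟩
    exact Retract.projective
      { i := sq.lift, r := Projective.π fac.Z, retract := sq.fac_right }
  · intro N E Y n p hnp hN g
    have := hk _ _ hnp hN
    have sq : CommSq (0 : X ⟶ E) k p (cokernel.π k ≫ g) := ⟨by simp⟩
    refine ⟨cokernel.desc k sq.lift sq.fac_left, ?_⟩
    rw [← cancel_epi (cokernel.π k), cokernel.π_desc_assoc, sq.fac_right]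


/-! ### Splicing doubly infinite resolutions -/

lemma projective_mem {𝓛 : Set (ModuleCat.{0} R)} {𝓐 : Set (ModuleCat.{0} Rᵐᵒᵖ)}
    (hdp : CompleteDualityPair 𝓛 𝓐) (F : ModuleCat.{0} R) [Projective F] : F ∈ 𝓛 := by
  have : Module.Projective R F := (IsProjective.iff_projective F).2 inferInstance
  obtain ⟨s, hs⟩ := Module.Projective.out (R := R) (P := F)
  classical
  let e := finsuppLEquivDirectSum R R F
  refine hdp.summands_L _ (hdp.coprod_L F (fun _ => ModuleCat.of R R) fun _ => hdp.self_mem) F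
    (ModuleCat.ofHom (e.toLinearMap ∘ₗ s))
    (ModuleCat.ofHom (Finsupp.linearCombination R id ∘ₗ e.symm.toLinearMap)) ?_
  ext x
  simpa using hs x

/-- A class of modules closed under syzygies and projective cosyzygies consists of syzygies of
doubly infinite projective resolutions with all syzygies in the class. -/
lemma exists_int_syzygies (𝓦 : ModuleCat.{0} R → Prop)
    (hl : ∀ X, 𝓦 X → ∃ (K F : ModuleCat.{0} R) (k : K ⟶ F) (e : F ⟶ X),
      Projective F ∧ SES k e ∧ 𝓦 K)
    (hr : ∀ X, 𝓦 X → ∃ (Q X' : ModuleCat.{0} R) (k : X ⟶ Q) (e : Q ⟶ X'),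
      Projective Q ∧ SES k e ∧ 𝓦 X')
    (M : ModuleCat.{0} R) (hM : 𝓦 M) :
    ∃ (W X : ℤ → ModuleCat.{0} R) (k : ∀ n, W (n + 1) ⟶ X n) (e : ∀ n, X n ⟶ W n),
      W 0 = M ∧ (∀ n, 𝓦 (W n)) ∧ (∀ n, Projective (X n)) ∧ ∀ n, SES (k n) (e n) := by
  choose! K F k e hF hke hK using hl
  choose! Q C k' e' hQ hke' hC using hr
  let a : ℕ → ModuleCat.{0} R := fun n => K^[n] M
  let b : ℕ → ModuleCat.{0} R := fun n => C^[n] M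
  have ha : ∀ n, 𝓦 (a n) := fun n => by
    induction n with
    | zero => exact hM
    | succ n ih => simp only [a, Function.iterate_succ_apply'] at ih ⊢; exact hK _ ih
  have hb : ∀ n, 𝓦 (b n) := fun n => by
    induction n with
    | zero => exact hM
    | succ n ih => simp only [b, Function.iterate_succ_apply'] at ih ⊢; exact hC _ ih
  let W : ℤ → ModuleCat.{0} R := fun n =>
    match n with
    | Int.ofNat n => a n
    | Int.negSucc n => b (n + 1)
  have hW : ∀ n, 𝓦 (W n) := fun n =>
    match n with
    | Int.ofNat n => ha n
    | Int.negSucc n => hb (n + 1)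
  have step : ∀ n, ∃ (X : ModuleCat.{0} R) (k : W (n + 1) ⟶ X) (e : X ⟶ W n),
      Projective X ∧ SES k e := by
    rintro (n | n)
    · have : W (Int.ofNat n + 1) = K (W (Int.ofNat n)) :=
        Function.iterate_succ_apply' K n M
      rw [this]
      exact ⟨_, _, _, hF _ (hW (Int.ofNat n)), hke _ (hW (Int.ofNat n))⟩
    · have h₁ : W (Int.negSucc n + 1) = b n := by
        cases n with
        | zero => rfl
        | succ n =>
          have : Int.negSucc (n + 1) + 1 = Int.negSucc n := by omega
          rw [this]
      have h₂ : W (Int.negSucc n) = C (b n) := Function.iterate_succ_apply' C n M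
      rw [h₁, h₂]
      exact ⟨_, _, _, hQ _ (hb _), hke' _ (hb _)⟩
  choose X k₀ e₀ hX hke₀ using step
  exact ⟨W, X, k₀, e₀, rfl, hW, hX, hke₀⟩

/-- `W (n + 1)` is the kernel of the differential `X n ⟶ X (n - 1)`, so `W 0` occurs at `n = -1`. -/
lemma isGProj_of_syzygies {𝓣 : Set (ModuleCat.{0} R)} {W X : ℤ → ModuleCat.{0} R}
    (k : ∀ n, W (n + 1) ⟶ X n) (e : ∀ n, X n ⟶ W n) (hX : ∀ n, Projective (X n))
    (h : ∀ n, SES (k n) (e n)) (hT : ∀ T ∈ 𝓣, ∀ n, ExtendsAlong (k n) T) :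
    IsGProj 𝓣 (W 0) := by
  have hm := fun n => (h n).mono
  have he := fun n => (h n).epi
  let C : ChainComplex (ModuleCat.{0} R) ℤ :=
    ChainComplex.of X (fun n => e (n + 1) ≫ k n) fun n => by
      rw [Category.assoc, reassoc_of% (h (n + 1)).1, zero_comp, comp_zero]
  have hd : ∀ n, C.d (n + 1) n = e (n + 1) ≫ k n := fun n => 
    ChainComplex.of_d X (fun n => e (n + 1) ≫ k n) n
  refine ⟨C, ⟨hX, fun n => ?_, fun T hTT n g hg => ?_⟩, -1, ?_⟩
  · obtain ⟨m, rfl⟩ : ∃ m, n = m + 1 := ⟨n - 1, by omega⟩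
    refine (HomologicalComplex.exactAt_iff' C (m + 1 + 1) (m + 1) m (by simp) (by simp)).2 ?_
    rw [ShortComplex.moduleCat_exact_iff]
    intro x hx
    change C.d (m + 1) m x = 0 at hx
    change ∃ y, C.d (m + 1 + 1) (m + 1) y = x
    rw [hd] at hx ⊢
    have hx' : e (m + 1) x = 0 :=
      (ModuleCat.mono_iff_injective (k m)).1 inferInstance (hx.trans (map_zero _).symm)
    obtain ⟨w, hw⟩ := (ShortComplex.moduleCat_exact_iff _).1 (h (m + 1)).2.exact x hx'
    obtain ⟨v, hv⟩ := (ModuleCat.epi_iff_surjective (e (m + 1 + 1))).1 inferInstance w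
    exact ⟨v, (congrArg (k (m + 1)) hv).trans hw⟩
  · obtain ⟨m, rfl⟩ : ∃ m, n = m + 1 := ⟨n - 1, by omega⟩
    rw [hd, Category.assoc] at hg
    rw [show m + 1 - 1 = m by omega, hd]
    obtain ⟨g', hg'⟩ := (h (m + 1)).desc g (by
      rw [← cancel_epi (e (m + 1 + 1)), hg, comp_zero])
    obtain ⟨t, ht⟩ := hT T hTT m g'
    exact ⟨t, by rw [Category.assoc, ht, hg']⟩
  · have key : ∀ a b c, c = a + 1 → a = b + 1 → Nonempty (W c ≅ kernel (C.d a b)) := by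
      rintro _ b _ rfl rfl
      obtain ⟨y, hy⟩ := (h (b + 1)).lift (kernel.ι (C.d (b + 1) b)) (by
        rw [← cancel_mono (k b), Category.assoc, ← hd, kernel.condition, zero_comp])
      refine ⟨⟨kernel.lift _ (k (b + 1)) (by rw [hd, reassoc_of% (h (b + 1)).1, zero_comp]), y,
        ?_, ?_⟩⟩
      · rw [← cancel_mono (k (b + 1)), Category.assoc, hy, kernel.lift_ι, Category.id_comp]
      · rw [← cancel_mono (kernel.ι _), Category.assoc, kernel.lift_ι, hy, Category.id_comp]
    exact key _ _ _ (by norm_num) (by norm_num)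

end Helpers

theorem stmt18
    (R : Type) [Ring R] (𝓛 : Set (ModuleCat.{0} R)) (𝓐 : Set (ModuleCat.{0} Rᵐᵒᵖ))
    (hdp : CompleteDualityPair 𝓛 𝓐) (G : ModuleCat.{0} R) (hG : IsSGProj 𝓛 G) (M : ModuleCat.{0} R)
    (hM : ∀ N : ModuleCat.{0} R, ExtVanish 1 G N → ExtVanish 1 M N) :
    IsGProj 𝓛 M := by
  obtain ⟨P, f, hP, ⟨w, hf⟩, hfT, ⟨i⟩⟩ := hG
  let j : G ⟶ P := i.hom ≫ kernel.ι f
  let q : P ⟶ G := kernel.lift f f w ≫ i.inv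
  have hqj : q ≫ j = f := by simp [q, j]
  have hfq : f ≫ q = 0 := by
    rw [← cancel_mono j, Category.assoc, hqj, w, zero_comp]
  have hjm : Mono j := inferInstance
  have hqe : Epi q := by
    have : Epi (kernel.lift f f w) := (ShortComplex.exact_iff_epi_kernel_lift _).1 hf
    infer_instance
  have hjq : SES j q := by
    refine ⟨?_, { exact := ?_ }⟩
    · rw [← cancel_epi q, reassoc_of% hqj, hfq, comp_zero]
    · refine ShortComplex.exact_of_f_is_kernel _ (KernelFork.IsLimit.ofι' _ _ fun {A} g hg => ?_)
      have hgf : g ≫ f = 0 := by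
        have hg' : g ≫ q = 0 := hg
        exact (congrArg (g ≫ ·) hqj.symm).trans (by rw [reassoc_of% hg', zero_comp])
      exact ⟨kernel.lift f g hgf ≫ i.inv, by simp [j]⟩
  have hL : ∀ T ∈ 𝓛, ExtendsAlong j T := fun T hT u => by
    obtain ⟨h, hh⟩ := hfT T hT (q ≫ u) (by rw [reassoc_of% hfq, zero_comp])
    exact ⟨h, by rw [← cancel_epi q, reassoc_of% hqj, hh]⟩
  have hM' : LiftsFrom j M :=
    LiftsFrom.of_extendsAlong (ses_kernel (Projective.π M)) fun N hN =>
      (extVanish_one_iff (ses_kernel (Projective.π M))).1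
        (hM N ((extVanish_one_iff hjq).2 hN))
  obtain ⟨W, X, k, e, rfl, hW, hX, hke⟩ := exists_int_syzygies (LiftsFrom j)
    (fun X hX => ⟨_, _, _, _, inferInstance, ses_kernel (Projective.π X),
      hX.syzygy hjq (ses_kernel (Projective.π X))⟩)
    (fun X hX => hX.exists_cosyzygy hjq fun F _ => hL F (projective_mem hdp F)) M hM'
  exact isGProj_of_syzygies k e hX hke fun T hT n => (hW n).extendsAlong (hke n) (hL T hT)

end DualityPaper
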